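/- Limit for the negative-exponential part (display (eq:AsyA3)): lim_{t→0⁺} ∫₀^∞ ((e^{t^{1/Y}·v} − 1)/t^{1/Y})·P((Z + γ̃_t)⁺ + Ũ ≤ −v) dv = ∫₀^∞ v·P(Z⁺ + Ũ ≤ −v) dv, and this common value equals (1/2)·E[((Z⁺ + Ũ)⁻)²], where a⁻ := max(−a,0). -/

import Mathlib

open MeasureTheory ProbabilityTheory Filter Topology Asymptotics Set

/-!
The characteristic function of `U` extends to `f z = exp (A (-iz)^Y)`, which is continuous on the
closed upper half-plane, holomorphic inside, and of growth `exp (O(|z|²))` since `Y ≤ 2`. Integrated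
over `ℝ` against the Gaussian weight `exp (-b (z - is)²)` it gives, by Fubini, a multiple of
`E exp (-sU - U² / (4b))`; moved to the line `ℝ + is`, where the weight is real and positive, the
same integral is bounded uniformly in large `b`. Letting `b → ∞`, Fatou's lemma yields
`E exp (-sU) < ∞` for every `s > 0`.

By AM-GM `Ũ` then has a finite exponential moment too, and as `Ũ ≤ (Z + γ)⁺ + Ũ` for every `γ`,
Chernoff's bound dominates all the tails `P((Z + γ)⁺ + Ũ ≤ -v)` by one exponential. The limit
follows by dominated convergence, the tails converging at every `v` such that `-v` is not an atom of
`Z⁺ + Ũ`, and its second form is the layer-cake formula.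
-/

section ContourShift

variable {E : Type*} [NormedAddCommGroup E] [NormedSpace ℂ E] {f : ℂ → E} {g : ℝ → ℝ} {a b : ℝ}

lemma tendsto_intervalIntegral_vertical_cocompact (hab : a ≤ b)
    (hg : Tendsto g (cocompact ℝ) (𝓝 0))
    (hfg : ∀ x : ℝ, ∀ y ∈ Icc a b, ‖f (x + y * Complex.I)‖ ≤ g x) :
    Tendsto (fun x : ℝ => ∫ y in a..b, f (x + y * Complex.I)) (cocompact ℝ) (𝓝 0) := by
  have hg' : Tendsto (fun x => g x * |b - a|) (cocompact ℝ) (𝓝 0) := by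
    simpa using hg.mul_const |b - a|
  refine squeeze_zero_norm (fun x => ?_) hg'
  refine intervalIntegral.norm_integral_le_of_norm_le_const fun y hy => hfg x y ?_
  exact Ioc_subset_Icc_self (uIoc_of_le hab ▸ hy)

theorem integral_horizontal_eq_of_diffContOnCl (hab : a < b)
    (hf : DiffContOnCl ℂ f (Complex.im ⁻¹' Ioo a b))
    (hg : Tendsto g (cocompact ℝ) (𝓝 0)) (hgint : Integrable g)
    (hfg : ∀ x : ℝ, ∀ y ∈ Icc a b, ‖f (x + y * Complex.I)‖ ≤ g x) :
    ∫ x : ℝ, f (x + a * Complex.I) = ∫ x : ℝ, f (x + b * Complex.I) := by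
  have hcont : ContinuousOn f (Complex.im ⁻¹' Icc a b) := by
    simpa only [Complex.closure_preimage_im, closure_Ioo hab.ne] using hf.continuousOn
  have hfint (y : ℝ) (hy : y ∈ Icc a b) : Integrable fun x : ℝ => f (x + y * Complex.I) :=
    hgint.mono' (hcont.comp_continuous (by fun_prop)
      fun x => by simpa using hy).aestronglyMeasurable (.of_forall fun x => hfg x y hy)
  have hhoriz (y : ℝ) (hy : y ∈ Icc a b) :=
    intervalIntegral_tendsto_integral (hfint y hy) tendsto_neg_atTop_atBot tendsto_id
  have hvert := tendsto_intervalIntegral_vertical_cocompact hab.le hg hfg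
  have hright := (hvert.mono_left atTop_le_cocompact).const_smul Complex.I
  have hleft := ((hvert.mono_left atBot_le_cocompact).comp
    tendsto_neg_atTop_atBot).const_smul Complex.I
  have hlim := (((hhoriz a (left_mem_Icc.2 hab.le)).sub
    (hhoriz b (right_mem_Icc.2 hab.le))).add hright).sub hleft
  have hrect (T : ℝ) :=
    Complex.integral_boundary_rect_eq_zero_of_continuousOn_of_differentiableOn f
      ⟨-T, a⟩ ⟨T, b⟩ (hcont.mono fun z hz => uIcc_of_le hab.le ▸ hz.2)
      (hf.differentiableOn.mono fun z hz => by simpa [hab.le] using hz.2)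
  have hzero := tendsto_nhds_unique hlim (tendsto_const_nhds.congr fun T => (hrect T).symm)
  simpa [sub_eq_zero] using hzero

end ContourShift

section ExponentialMoment

variable {μ : Measure ℝ} [IsFiniteMeasure μ] {b : ℝ}

lemma integral_cexp_mul_gaussian (hb : 0 < b) (s y : ℝ) :
    ∫ x : ℝ, Complex.exp (x * y * Complex.I) *
        Complex.exp (-(b : ℂ) * (x - s * Complex.I) ^ 2) =
      ((√(Real.pi / b) * Real.exp (-(s * y) - y ^ 2 / (4 * b)) : ℝ) : ℂ) := by
  have hb' : (b : ℂ) ≠ 0 := by exact_mod_cast hb.ne'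
  have hquad (x : ℝ) : Complex.exp (x * y * Complex.I) *
      Complex.exp (-(b : ℂ) * (x - s * Complex.I) ^ 2) =
      Complex.exp (-(b : ℂ) * x ^ 2 + (2 * b * s + y) * Complex.I * x + b * s ^ 2) := by
    rw [← Complex.exp_add]
    congr 1
    linear_combination (-(b : ℂ) * s ^ 2) * Complex.I_sq
  simp_rw [hquad]
  rw [integral_cexp_quadratic (by simpa using hb), Real.sqrt_eq_rpow, neg_neg, Complex.ofReal_mul,
    Complex.ofReal_cpow (by positivity), Complex.ofReal_exp]
  push_cast
  congr 2
  field_simp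
  linear_combination (2 * (b : ℂ) * s + y) ^ 2 * Complex.I_sq

lemma integral_charFun_mul_gaussian (hb : 0 < b) (s : ℝ) :
    ∫ x : ℝ, charFun μ x * Complex.exp (-(b : ℂ) * (x - s * Complex.I) ^ 2) =
      ((√(Real.pi / b) * ∫ y, Real.exp (-(s * y) - y ^ 2 / (4 * b)) ∂μ : ℝ) : ℂ) := by
  have hgauss : Integrable fun x : ℝ => Complex.exp (-(b : ℂ) * (x - s * Complex.I) ^ 2) := by
    simpa [sub_eq_add_neg] using
      GaussianFourier.integrable_cexp_neg_mul_sq_add_real_mul_I (b := (b : ℂ)) (by simpa using hb)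
        (-s)
  have hprod : Integrable (Function.uncurry fun x y : ℝ => Complex.exp (x * y * Complex.I) *
      Complex.exp (-(b : ℂ) * (x - s * Complex.I) ^ 2)) (volume.prod μ) := by
    refine (hgauss.mul_prod (integrable_const (1 : ℂ))).mono (by fun_prop) (.of_forall fun p => ?_)
    simp [Function.uncurry, Complex.norm_exp]
  simp_rw [charFun_apply_real, ← integral_mul_const]
  rw [integral_integral_swap hprod]
  simp_rw [integral_cexp_mul_gaussian hb]
  rw [integral_complex_ofReal, integral_const_mul]

lemma neg_mul_sub_sq_div_le (hb : 0 < b) (s y : ℝ) : -(s * y) - y ^ 2 / (4 * b) ≤ b * s ^ 2 := by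
  have hsq : b * s ^ 2 - (-(s * y) - y ^ 2 / (4 * b)) = (y + 2 * b * s) ^ 2 / (4 * b) := by
    field_simp
    ring
  have : 0 ≤ (y + 2 * b * s) ^ 2 / (4 * b) := by positivity
  linarith

lemma integrable_exp_neg_mul_sub_sq_div (hb : 0 < b) (s : ℝ) :
    Integrable (fun y => Real.exp (-(s * y) - y ^ 2 / (4 * b))) μ := by
  refine .of_bound (by fun_prop) (Real.exp (b * s ^ 2)) (.of_forall fun y => ?_)
  rw [Real.norm_eq_abs, Real.abs_exp]
  exact Real.exp_le_exp.2 (neg_mul_sub_sq_div_le hb s y)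

variable {f : ℂ → ℂ} {s A K : ℝ}

lemma norm_mul_gaussian_le (hA : 0 ≤ A)
    (hfK : ∀ z, z.im ∈ Icc 0 s → ‖f z‖ ≤ Real.exp (K + A * ‖z‖ ^ 2)) (b x : ℝ) {y : ℝ}
    (hy : y ∈ Icc 0 s) :
    ‖f (x + y * Complex.I) *
        Complex.exp (-(b : ℂ) * (x + y * Complex.I - s * Complex.I) ^ 2)‖ ≤
      Real.exp (K + A * s ^ 2 + b * (s - y) ^ 2) * Real.exp (-(b - A) * x ^ 2) := by
  have hf : ‖f (x + y * Complex.I)‖ ≤ Real.exp (K + A * (x ^ 2 + s ^ 2)) := by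
    refine (hfK _ (by simpa using hy)).trans ?_
    rw [Complex.sq_norm, Complex.normSq_add_mul_I]
    gcongr
    exacts [hy.1, hy.2]
  have hsq : -(b : ℂ) * (x + y * Complex.I - s * Complex.I) ^ 2 =
      (-b * x ^ 2 + b * (s - y) ^ 2 : ℝ) + (2 * b * x * (s - y) : ℝ) * Complex.I := by
    push_cast
    linear_combination (-(b : ℂ) * (y - s) ^ 2) * Complex.I_sq
  rw [norm_mul, Complex.norm_exp, hsq, Complex.add_re, Complex.ofReal_re, Complex.re_ofReal_mul,
    Complex.I_re, mul_zero, add_zero]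
  calc _ ≤ Real.exp (K + A * (x ^ 2 + s ^ 2)) * Real.exp (-b * x ^ 2 + b * (s - y) ^ 2) := by gcongr
    _ = _ := by
      rw [← Real.exp_add, ← Real.exp_add]
      ring_nf

lemma integral_mul_gaussian_eq_shift (hs : 0 < s) (hA : 0 ≤ A) (hAb : A < b)
    (hf : DiffContOnCl ℂ f (Complex.im ⁻¹' Ioo 0 s))
    (hfK : ∀ z, z.im ∈ Icc 0 s → ‖f z‖ ≤ Real.exp (K + A * ‖z‖ ^ 2)) :
    ∫ x : ℝ, f x * Complex.exp (-(b : ℂ) * (x - s * Complex.I) ^ 2) =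
      ∫ x : ℝ, f (x + s * Complex.I) * Complex.exp (-(b : ℂ) * x ^ 2) := by
  have hF : DiffContOnCl ℂ (fun z => f z * Complex.exp (-(b : ℂ) * (z - s * Complex.I) ^ 2))
      (Complex.im ⁻¹' Ioo 0 s) :=
    hf.smul (Differentiable.diffContOnCl (by fun_prop))
  have hg : Tendsto
      (fun x : ℝ => Real.exp (K + A * s ^ 2 + b * s ^ 2) * Real.exp (-(b - A) * x ^ 2))
      (cocompact ℝ) (𝓝 0) := by
    simpa using (tendsto_rpow_abs_mul_exp_neg_mul_sq_cocompact (sub_pos.2 hAb) 0).const_mul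
      (Real.exp (K + A * s ^ 2 + b * s ^ 2))
  have hshift := integral_horizontal_eq_of_diffContOnCl hs hF hg
    ((integrable_exp_neg_mul_sq (sub_pos.2 hAb)).const_mul _) fun x y hy => by
      refine (norm_mul_gaussian_le hA hfK b x hy).trans ?_
      have hbpos := hA.trans_lt hAb
      gcongr
      exacts [sub_nonneg.2 hy.2, sub_le_self s hy.1]
  simpa using hshift

lemma integral_exp_neg_mul_sub_sq_div_le (hs : 0 < s) (hA : 0 ≤ A) (hAb : A < b)
    (hf : DiffContOnCl ℂ f (Complex.im ⁻¹' Ioo 0 s))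
    (hfK : ∀ z, z.im ∈ Icc 0 s → ‖f z‖ ≤ Real.exp (K + A * ‖z‖ ^ 2))
    (hμ : ∀ x : ℝ, charFun μ x = f x) :
    ∫ y, Real.exp (-(s * y) - y ^ 2 / (4 * b)) ∂μ ≤ Real.exp (K + A * s ^ 2) * √(b / (b - A)) := by
  have hb : 0 < b := hA.trans_lt hAb
  have hgauss := integral_charFun_mul_gaussian (μ := μ) hb s
  simp_rw [hμ, integral_mul_gaussian_eq_shift hs hA hAb hf hfK] at hgauss
  have hbound : √(Real.pi / b) * ∫ y, Real.exp (-(s * y) - y ^ 2 / (4 * b)) ∂μ ≤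
      Real.exp (K + A * s ^ 2) * √(Real.pi / (b - A)) := by
    rw [← integral_gaussian (b - A), ← integral_const_mul (Real.exp (K + A * s ^ 2))]
    refine ((le_abs_self _).trans_eq (Complex.norm_real _).symm).trans ?_
    rw [← hgauss]
    refine norm_integral_le_of_norm_le
      ((integrable_exp_neg_mul_sq (sub_pos.2 hAb)).const_mul _) (.of_forall fun x => ?_)
    simpa using norm_mul_gaussian_le hA hfK b x (right_mem_Icc.2 hs.le)
  have hsqrt : √(Real.pi / (b - A)) = √(Real.pi / b) * √(b / (b - A)) := by
    rw [← Real.sqrt_mul (by positivity)]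
    field_simp
  rw [hsqrt, mul_left_comm] at hbound
  exact le_of_mul_le_mul_left hbound (by positivity)

theorem integrable_exp_neg_mul_of_charFun_eq (hs : 0 < s) (hA : 0 ≤ A)
    (hf : DiffContOnCl ℂ f (Complex.im ⁻¹' Ioo 0 s))
    (hfK : ∀ z, z.im ∈ Icc 0 s → ‖f z‖ ≤ Real.exp (K + A * ‖z‖ ^ 2))
    (hμ : ∀ x : ℝ, charFun μ x = f x) :
    Integrable (fun y => Real.exp (-(s * y))) μ := by
  let b (n : ℕ) : ℝ := 2 * A + 1 + n
  have hAb (n : ℕ) : A < b n := by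
    simp only [b]
    linarith [n.cast_nonneg (α := ℝ)]
  have hb (n : ℕ) : 0 < b n := hA.trans_lt (hAb n)
  have hlim (y : ℝ) : Tendsto (fun n => Real.exp (-(s * y) - y ^ 2 / (4 * b n))) atTop
      (𝓝 (Real.exp (-(s * y)))) := by
    have hb_top : Tendsto (fun n => 4 * b n) atTop atTop :=
      (tendsto_atTop_add_const_left _ _ tendsto_natCast_atTop_atTop).const_mul_atTop (by norm_num)
    simpa using ((hb_top.const_div_atTop (y ^ 2)).const_sub (-(s * y))).rexp
  have hratio (n : ℕ) : b n / (b n - A) ≤ 2 := by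
    rw [div_le_iff₀ (sub_pos.2 (hAb n))]
    simp only [b]
    linarith [n.cast_nonneg (α := ℝ)]
  have hbound (n : ℕ) : ∫⁻ y, ‖Real.exp (-(s * y) - y ^ 2 / (4 * b n))‖ₑ ∂μ ≤
      ENNReal.ofReal (Real.exp (K + A * s ^ 2) * √2) := by
    rw [← ofReal_integral_norm_eq_lintegral_enorm (integrable_exp_neg_mul_sub_sq_div (hb n) s)]
    simp_rw [Real.norm_eq_abs, Real.abs_exp]
    refine ENNReal.ofReal_le_ofReal
      ((integral_exp_neg_mul_sub_sq_div_le hs hA (hAb n) hf hfK hμ).trans ?_)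
    gcongr
    exact hratio n
  refine integrable_of_tendsto (.of_forall hlim) (fun n => by fun_prop) ?_
  exact ne_top_of_le_ne_top ENNReal.ofReal_ne_top
    (liminf_le_of_frequently_le' (.of_forall hbound))

end ExponentialMoment

section SkewedStable

/-- The characteristic function `z ↦ exp (A (-iz)^Y)` of the totally positively skewed strictly
`Y`-stable law, extended to the closed upper half-plane. The Lévy density `C x ^ (-Y - 1)` on
`(0, ∞)` corresponds to `A = C Γ(-Y)`. -/
noncomputable def skewedStableCharFun (A Y : ℝ) (z : ℂ) : ℂ :=
  Complex.exp (A * (-Complex.I * z) ^ (Y : ℂ))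

variable {A Y : ℝ}

lemma neg_I_mul_ofReal_cpow (hY : Y ≠ 0) (u : ℝ) :
    (-Complex.I * (u : ℂ)) ^ (Y : ℂ) = ((|u| ^ Y : ℝ) : ℂ) *
      (((Real.cos (Real.pi * Y / 2) : ℝ) : ℂ)
        - Complex.I * ((Real.sign u : ℝ) : ℂ) * ((Real.sin (Real.pi * Y / 2) : ℝ) : ℂ)) := by
  rcases eq_or_ne u 0 with rfl | hu
  · simp [hY]
  have hlog : Complex.log (-Complex.I * u) = Real.log |u| - u.sign * (Real.pi / 2) * Complex.I := by
    rcases hu.lt_or_gt with hneg | hpos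
    · have hmul : -Complex.I * u = (|u| : ℝ) * Complex.I := by simp [abs_of_neg hneg, mul_comm]
      rw [hmul, Complex.log_ofReal_mul (abs_pos.2 hu) Complex.I_ne_zero, Complex.log_I,
        Real.sign_of_neg hneg]
      push_cast
      ring
    · have hmul : -Complex.I * u = (|u| : ℝ) * -Complex.I := by simp [abs_of_pos hpos, mul_comm]
      rw [hmul, Complex.log_ofReal_mul (abs_pos.2 hu) (neg_ne_zero.2 Complex.I_ne_zero),
        Complex.log_neg_I, Real.sign_of_pos hpos]
      push_cast
      ring
  have harg : ((Real.log |u| : ℂ) - u.sign * (Real.pi / 2) * Complex.I) * Y =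
      ((Real.log |u| * Y : ℝ) : ℂ) - (u.sign * (Real.pi * Y / 2) : ℝ) * Complex.I := by
    push_cast
    ring
  rw [Complex.cpow_def_of_ne_zero (by simp [hu]), hlog, Real.rpow_def_of_pos (abs_pos.2 hu), harg,
    Complex.exp_sub, Complex.ofReal_exp, div_eq_mul_inv, ← Complex.exp_neg, ← neg_mul,
    Complex.exp_mul_I, Complex.cos_neg, Complex.sin_neg]
  rcases Real.sign_apply_eq_of_ne_zero u hu with hsign | hsign <;>
  · simp only [hsign, Complex.ofReal_neg, Complex.ofReal_one, neg_mul, one_mul, Complex.cos_neg,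
      Complex.sin_neg, Complex.ofReal_cos, Complex.ofReal_sin]
    ring

lemma skewedStableCharFun_ofReal (hY : Y ≠ 0) (u : ℝ) :
    skewedStableCharFun A Y u = Complex.exp (((A * |u| ^ Y : ℝ) : ℂ) *
      (((Real.cos (Real.pi * Y / 2) : ℝ) : ℂ)
        - Complex.I * ((Real.sign u : ℝ) : ℂ) * ((Real.sin (Real.pi * Y / 2) : ℝ) : ℂ))) := by
  rw [skewedStableCharFun, neg_I_mul_ofReal_cpow hY, Complex.ofReal_mul A, ← mul_assoc (A : ℂ)]

lemma charFun_map_eq_skewedStableCharFun {Ω : Type*} [MeasurableSpace Ω] {P : Measure Ω}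
    {U : Ω → ℝ} (hU : AEMeasurable U P) (hY : Y ≠ 0)
    (hchar : ∀ u : ℝ, (∫ ω, Complex.exp (Complex.I * u * (U ω)) ∂P) =
      Complex.exp (((A * |u| ^ Y : ℝ) : ℂ) *
        (((Real.cos (Real.pi * Y / 2) : ℝ) : ℂ)
          - Complex.I * ((Real.sign u : ℝ) : ℂ) * ((Real.sin (Real.pi * Y / 2) : ℝ) : ℂ))))
    (u : ℝ) : charFun (P.map U) u = skewedStableCharFun A Y u := by
  rw [skewedStableCharFun_ofReal hY, ← hchar, charFun_apply_real,
    integral_map hU (by fun_prop)]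
  simp only [mul_comm, mul_left_comm]

lemma diffContOnCl_skewedStableCharFun (hY : 0 < Y) (s : ℝ) :
    DiffContOnCl ℂ (skewedStableCharFun A Y) (Complex.im ⁻¹' Ioo 0 s) where
  differentiableOn z hz := by
    have hslit : -Complex.I * z ∈ Complex.slitPlane := .inl (by simpa using hz.1)
    unfold skewedStableCharFun
    fun_prop (disch := assumption)
  continuousOn := by
    rw [Complex.closure_preimage_im]
    intro z hz
    have hre : 0 ≤ (-Complex.I * z).re := by
      simpa using (closure_mono Ioo_subset_Ioi_self hz : z.im ∈ closure (Ioi 0))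
    have hcpow : ContinuousAt (fun w : ℂ => w ^ (Y : ℂ)) (-Complex.I * z) :=
      Complex.continuousAt_cpow_const_of_re_pos (.inl hre) (by simpa using hY)
    have hcomp : ContinuousAt (fun w : ℂ => (-Complex.I * w) ^ (Y : ℂ)) z :=
      hcpow.comp (by fun_prop)
    exact (continuousAt_const.mul hcomp).cexp.continuousWithinAt

lemma rpow_le_one_add_sq {r : ℝ} (hr : 0 ≤ r) (hY : Y ∈ Icc 0 2) : r ^ Y ≤ 1 + r ^ 2 := by
  rcases le_total r 1 with hr1 | hr1
  · linarith [Real.rpow_le_one hr hr1 hY.1, sq_nonneg r]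
  · have hpow := Real.rpow_le_rpow_of_exponent_le hr1 hY.2
    rw [Real.rpow_two] at hpow
    linarith

lemma norm_skewedStableCharFun_le (hY : Y ∈ Icc 0 2) (z : ℂ) :
    ‖skewedStableCharFun A Y z‖ ≤ Real.exp (|A| + |A| * ‖z‖ ^ 2) := by
  rw [skewedStableCharFun, Complex.norm_exp, Real.exp_le_exp]
  calc (A * (-Complex.I * z) ^ (Y : ℂ) : ℂ).re
      ≤ ‖(A * (-Complex.I * z) ^ (Y : ℂ) : ℂ)‖ := Complex.re_le_norm _
    _ = |A| * ‖z‖ ^ Y := by simp [Complex.norm_cpow_real]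
    _ ≤ |A| * (1 + ‖z‖ ^ 2) := by gcongr; exact rpow_le_one_add_sq (norm_nonneg z) hY
    _ = |A| + |A| * ‖z‖ ^ 2 := by ring

lemma integrable_exp_neg_mul_of_skewedStable {Ω : Type*} [MeasurableSpace Ω] {P : Measure Ω}
    [IsFiniteMeasure P] {U : Ω → ℝ} (hY : Y ∈ Ioc 0 2) (hU : AEMeasurable U P)
    (hchar : ∀ u : ℝ, charFun (P.map U) u = skewedStableCharFun A Y u) {s : ℝ} (hs : 0 < s) :
    Integrable (fun ω => Real.exp (-(s * U ω))) P :=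
  (integrable_exp_neg_mul_of_charFun_eq hs (abs_nonneg A) (diffContOnCl_skewedStableCharFun hY.1 s)
    (fun z _ => norm_skewedStableCharFun_le ⟨hY.1.le, hY.2⟩ z) hchar).comp_aemeasurable hU

end SkewedStable

section ExponentialTails
variable {Ω : Type*} [MeasurableSpace Ω] {P : Measure Ω}

lemma integrable_exp_add {X X' : Ω → ℝ} (hX : AEMeasurable X P) (hX' : AEMeasurable X' P)
    (hXint : Integrable (fun ω => Real.exp (2 * X ω)) P)
    (hX'int : Integrable (fun ω => Real.exp (2 * X' ω)) P) :
    Integrable (fun ω => Real.exp (X ω + X' ω)) P := by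
  refine (hXint.add hX'int).mono' (by fun_prop) (.of_forall fun ω => ?_)
  rw [Real.norm_eq_abs, Real.abs_exp, Real.exp_add, Pi.add_apply, two_mul, two_mul, Real.exp_add,
    Real.exp_add]
  nlinarith [sq_nonneg (Real.exp (X ω) - Real.exp (X' ω)), Real.exp_pos (X ω), Real.exp_pos (X' ω)]

variable [IsFiniteMeasure P]

lemma measureReal_le_neg_le_of_le {W X : Ω → ℝ} {c : ℝ} (hc : 0 ≤ c) (hWX : W ≤ X)
    (hW : Integrable (fun ω => Real.exp (-(c * W ω))) P) (v : ℝ) :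
    P.real {ω | X ω ≤ -v} ≤ (∫ ω, Real.exp (-(c * W ω)) ∂P) * Real.exp (-c * v) := by
  have hmono : P.real {ω | X ω ≤ -v} ≤ P.real {ω | W ω ≤ -v} :=
    measureReal_mono fun ω hω => (hWX ω).trans hω
  have hchernoff := measure_le_le_exp_mul_mgf (-v) (neg_nonpos.2 hc) (by simpa using hW)
  simpa [mgf, mul_comm] using hmono.trans hchernoff

lemma measurable_measureReal_le_neg (X : Ω → ℝ) :
    Measurable fun v : ℝ => P.real {ω | X ω ≤ -v} :=
  Antitone.measurable fun _ _ hvw =>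
    measureReal_mono fun _ hω => le_trans hω (neg_le_neg hvw)

lemma ae_measure_eq_neg_eq_zero {X : Ω → ℝ} (hX : Measurable X) :
    ∀ᵐ v : ℝ, P {ω | X ω = -v} = 0 := by
  filter_upwards [(Measure.countable_meas_level_set_pos (μ := P) hX.neg).ae_notMem volume] with v hv
  simpa [neg_eq_iff_eq_neg] using hv

variable {ι : Type*} {l : Filter ι} [l.IsCountablyGenerated]

lemma tendsto_measureReal_le_of_ae_tendsto {X : ι → Ω → ℝ} {X' : Ω → ℝ}
    (hX : ∀ i, Measurable (X i)) (hX' : Measurable X')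
    (hlim : ∀ᵐ ω ∂P, Tendsto (fun i => X i ω) l (𝓝 (X' ω))) {c : ℝ} (hc : P {ω | X' ω = c} = 0) :
    Tendsto (fun i => P.real {ω | X i ω ≤ c}) l (𝓝 (P.real {ω | X' ω ≤ c})) := by
  refine (ENNReal.tendsto_toReal (measure_ne_top _ _)).comp ?_
  refine tendsto_measure_of_ae_tendsto_indicator_of_isFiniteMeasure l
    (measurableSet_le hX' measurable_const) (fun i => measurableSet_le (hX i) measurable_const) ?_
  have hne : ∀ᵐ ω ∂P, X' ω ≠ c := by simpa [ae_iff] using hc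
  filter_upwards [hlim, hne] with ω hω hne
  rcases hne.lt_or_gt with hlt | hgt
  · filter_upwards [hω.eventually_lt_const hlt] with i hi
    simp [hi.le, hlt.le]
  · filter_upwards [hω.eventually_const_lt hgt] with i hi
    simp [hi.not_ge, hgt.not_ge]

lemma abs_exp_mul_sub_one_div_le (a : ℝ) {v : ℝ} (hv : 0 ≤ v) :
    |(Real.exp (a * v) - 1) / a| ≤ v * Real.exp (|a| * v) := by
  rcases eq_or_ne a 0 with rfl | ha
  · simpa
  have hexp : |Real.exp (a * v) - 1| ≤ |a * v| * Real.exp |a * v| := by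
    have := Complex.norm_exp_sub_sum_le_norm_mul_exp (a * v : ℝ) 1
    simp only [Finset.sum_range_one, pow_zero, Nat.factorial_zero, Nat.cast_one, div_one, pow_one,
      Complex.norm_real, Real.norm_eq_abs] at this
    exact_mod_cast this
  rw [abs_div, div_le_iff₀ (abs_pos.2 ha)]
  rw [abs_mul, abs_of_nonneg hv] at hexp
  linarith

lemma tendsto_exp_mul_sub_one_div (v : ℝ) :
    Tendsto (fun a => (Real.exp (a * v) - 1) / a) (𝓝[≠] 0) (𝓝 v) := by
  have hderiv : HasDerivAt (fun a => Real.exp (a * v)) v 0 := by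
    simpa using ((hasDerivAt_id (0 : ℝ)).mul_const v).exp
  simpa [div_eq_inv_mul] using hderiv.tendsto_slope_zero

theorem tendsto_integral_exp_mul_sub_one_div_mul_measureReal {a : ι → ℝ}
    {X : ι → Ω → ℝ} {X' : Ω → ℝ} {K c : ℝ}
    (ha : Tendsto a l (𝓝[≠] 0)) (hX : ∀ i, Measurable (X i)) (hX' : Measurable X')
    (hlim : ∀ᵐ ω ∂P, Tendsto (fun i => X i ω) l (𝓝 (X' ω))) (hc : 0 < c)
    (htail : ∀ i v, P.real {ω | X i ω ≤ -v} ≤ K * Real.exp (-c * v)) :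
    Tendsto (fun i => ∫ v in Ioi 0, (Real.exp (a i * v) - 1) / a i * P.real {ω | X i ω ≤ -v}) l
      (𝓝 (∫ v in Ioi 0, v * P.real {ω | X' ω ≤ -v})) := by
  refine tendsto_integral_filter_of_dominated_convergence
    (fun v => K * (v * Real.exp (-(c / 2) * v))) (.of_forall fun i => ?_) ?_ ?_ ?_
  · have := measurable_measureReal_le_neg (P := P) (X i)
    fun_prop
  · have hsmall : ∀ᶠ i in l, |a i| < c / 2 :=
      (tendsto_nhds_of_tendsto_nhdsWithin ha).abs.eventually_lt_const (by simpa using hc)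
    filter_upwards [hsmall] with i hi
    filter_upwards [self_mem_ae_restrict measurableSet_Ioi] with v (hv : 0 < v)
    rw [norm_mul, Real.norm_eq_abs, Real.norm_of_nonneg measureReal_nonneg]
    calc |(Real.exp (a i * v) - 1) / a i| * P.real {ω | X i ω ≤ -v}
        ≤ v * Real.exp (c / 2 * v) * (K * Real.exp (-c * v)) := by
          gcongr
          · exact (abs_exp_mul_sub_one_div_le _ hv.le).trans (by gcongr)
          · exact htail i v
      _ = K * (v * Real.exp (-(c / 2) * v)) := by
          rw [mul_mul_mul_comm, mul_comm v K, mul_assoc K, ← Real.exp_add]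
          ring_nf
  · simpa using (integrableOn_rpow_mul_exp_neg_mul_rpow (by norm_num : (-1 : ℝ) < 1) one_pos
      (half_pos hc)).const_mul K
  · filter_upwards [ae_restrict_of_ae (ae_measure_eq_neg_eq_zero (P := P) hX')] with v hv
    exact ((tendsto_exp_mul_sub_one_div v).comp ha).mul
      (tendsto_measureReal_le_of_ae_tendsto hX hX' hlim hv)

end ExponentialTails

section LayerCake
variable {Ω : Type*} [MeasurableSpace Ω] {P : Measure Ω} [IsFiniteMeasure P]

lemma integral_rpow_eq_mul_integral_rpow_mul_measureReal {f : Ω → ℝ} (hf : Measurable f)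
    (hf0 : 0 ≤ f) {p : ℝ} (hp : 0 < p) :
    ∫ ω, f ω ^ p ∂P = p * ∫ v in Ioi 0, v ^ (p - 1) * P.real {ω | v ≤ f ω} := by
  have hanti : Antitone fun v : ℝ => P.real {ω | v ≤ f ω} :=
    fun v w hvw => measureReal_mono fun ω hω => hvw.trans hω
  have hmeas := hanti.measurable
  rw [integral_eq_lintegral_of_nonneg_ae (.of_forall fun ω => Real.rpow_nonneg (hf0 ω) p)
      (hf.pow_const p).aestronglyMeasurable,
    lintegral_rpow_eq_lintegral_meas_le_mul P (.of_forall hf0) hf.aemeasurable hp,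
    ENNReal.toReal_mul, ENNReal.toReal_ofReal hp.le, integral_eq_lintegral_of_nonneg_ae]
  · congr 2
    refine setLIntegral_congr_fun measurableSet_Ioi fun v (hv : 0 < v) => ?_
    rw [ENNReal.ofReal_mul (by positivity), ofReal_measureReal, mul_comm]
  · filter_upwards [self_mem_ae_restrict measurableSet_Ioi] with v (hv : 0 < v)
    exact mul_nonneg (by positivity) measureReal_nonneg
  · fun_prop

lemma integral_mul_measureReal_le_neg {X : Ω → ℝ} (hX : Measurable X) :
    ∫ v in Ioi 0, v * P.real {ω | X ω ≤ -v} = 1 / 2 * ∫ ω, max (-X ω) 0 ^ 2 ∂P := by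
  have hcake := integral_rpow_eq_mul_integral_rpow_mul_measureReal (P := P)
    (f := fun ω => max (-X ω) 0) (by fun_prop) (fun ω => le_max_right _ _) two_pos
  have htail : ∫ v in Ioi 0, v ^ (2 - 1 : ℝ) * P.real {ω | v ≤ max (-X ω) 0} =
      ∫ v in Ioi 0, v * P.real {ω | X ω ≤ -v} := by
    refine setIntegral_congr_fun measurableSet_Ioi fun v (hv : 0 < v) => ?_
    norm_num [hv.not_ge, le_neg]
  simp only [Real.rpow_two, htail] at hcake
  linarith

end LayerCake

section Drift

lemma tendsto_rpow_nhdsGT_zero {q : ℝ} (hq : 0 < q) :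
    Tendsto (fun t : ℝ => t ^ q) (𝓝[>] 0) (𝓝[≠] 0) := by
  refine tendsto_nhdsWithin_iff.2 ⟨?_, ?_⟩
  · simpa [hq.ne'] using
      ((Real.continuousAt_rpow_const 0 q (.inr hq.le)).tendsto.mono_left nhdsWithin_le_nhds :
        Tendsto (fun t : ℝ => t ^ q) (𝓝[>] 0) (𝓝 (0 ^ q)))
  · filter_upwards [self_mem_nhdsWithin] with t ht
    exact (Real.rpow_pos_of_pos ht q).ne'

lemma isBigO_id_of_sub_isLittleO_rpow {κ : ℝ → ℝ} {e₁ e₂ p : ℝ} (hp : 1 ≤ p)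
    (hκ : (fun t => κ t - (e₁ * t + e₂ * t ^ p)) =o[𝓝[>] (0 : ℝ)] fun t => t ^ p) :
    κ =O[𝓝[>] 0] fun t => t := by
  have hpow : (fun t : ℝ => t ^ p) =O[𝓝[>] 0] fun t => t := by
    refine .of_bound 1 ?_
    filter_upwards [Ioo_mem_nhdsGT one_pos] with t ht
    simpa [abs_of_pos ht.1, abs_of_pos (Real.rpow_pos_of_pos ht.1 p)] using
      Real.rpow_le_rpow_of_exponent_ge ht.1 ht.2.le hp
  have hmain : (fun t : ℝ => e₁ * t + e₂ * t ^ p) =O[𝓝[>] 0] fun t => t :=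
    ((isBigO_refl _ _).const_mul_left e₁).add (hpow.const_mul_left e₂)
  simpa using (hκ.isBigO.trans hpow).add hmain

lemma tendsto_rpow_mul_sub_div {κ : ℝ → ℝ} {q : ℝ} (hq : 0 < q)
    (hκ : κ =O[𝓝[>] 0] fun t => t) (γ : ℝ) :
    Tendsto (fun t => t ^ q * (γ - κ t / t)) (𝓝[>] 0) (𝓝 0) := by
  have hratio : (fun t => κ t / t) =O[𝓝[>] 0] fun _ => (1 : ℝ) := by
    obtain ⟨C, hC⟩ := hκ.bound
    refine .of_bound C ?_
    filter_upwards [hC, self_mem_nhdsWithin] with t ht (ht0 : 0 < t)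
    rwa [norm_div, norm_one, mul_one, div_le_iff₀ (norm_pos_iff.2 ht0.ne')]
  have hbdd := (isBigO_const_const γ one_ne_zero _).sub hratio
  have hpow := (isLittleO_one_iff ℝ).2
    (tendsto_nhds_of_tendsto_nhdsWithin (tendsto_rpow_nhdsGT_zero hq))
  simpa [isLittleO_one_iff] using hpow.mul_isBigO hbdd

end Drift

theorem stmt19_general {Ω : Type*} [MeasurableSpace Ω] {P : Measure Ω} [IsFiniteMeasure P]
    {A B α β p q : ℝ} (hα : α ∈ Ioc 0 2) (hβ : β ∈ Ioc 0 2) (hp : 0 < p) (hq : 0 < q)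
    {U V : Ω → ℝ} (hU : Measurable U) (hV : Measurable V)
    (hUchar : ∀ u : ℝ, charFun (P.map U) u = skewedStableCharFun A α u)
    (hVchar : ∀ u : ℝ, charFun (P.map V) u = skewedStableCharFun B β u)
    {ι : Type*} {l : Filter ι} [l.IsCountablyGenerated] {a g : ι → ℝ}
    (ha : Tendsto a l (𝓝[≠] 0)) (hg : Tendsto g l (𝓝 0)) :
    Tendsto (fun i => ∫ v in Ioi 0, (Real.exp (a i * v) - 1) / a i *
        P.real {ω | max (U ω - V ω + g i) 0 + (p * U ω + q * V ω) ≤ -v}) l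
      (𝓝 (∫ v in Ioi 0, v * P.real {ω | max (U ω - V ω) 0 + (p * U ω + q * V ω) ≤ -v})) ∧
    ∫ v in Ioi 0, v * P.real {ω | max (U ω - V ω) 0 + (p * U ω + q * V ω) ≤ -v} =
      1 / 2 * ∫ ω, max (-(max (U ω - V ω) 0 + (p * U ω + q * V ω))) 0 ^ 2 ∂P := by
  have hUexp := integrable_exp_neg_mul_of_skewedStable hα hU.aemeasurable hUchar
    (mul_pos two_pos hp)
  have hVexp := integrable_exp_neg_mul_of_skewedStable hβ hV.aemeasurable hVchar
    (mul_pos two_pos hq)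
  have hexp : Integrable (fun ω => Real.exp (-(1 * (p * U ω + q * V ω)))) P := by
    have := integrable_exp_add (X := fun ω => -(p * U ω)) (X' := fun ω => -(q * V ω)) (P := P)
      (by fun_prop) (by fun_prop) (by simpa [mul_assoc] using hUexp)
      (by simpa [mul_assoc] using hVexp)
    simpa [add_comm] using this
  have htail (i : ι) := measureReal_le_neg_le_of_le zero_le_one
    (fun ω => le_add_of_nonneg_left (le_max_right (U ω - V ω + g i) 0)) hexp
  have hlim (ω : Ω) : Tendsto (fun i => max (U ω - V ω + g i) 0 + (p * U ω + q * V ω)) l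
      (𝓝 (max (U ω - V ω) 0 + (p * U ω + q * V ω))) := by
    simpa using ((hg.const_add (U ω - V ω)).max (tendsto_const_nhds (x := 0))).add_const
      (p * U ω + q * V ω)
  exact ⟨tendsto_integral_exp_mul_sub_one_div_mul_measureReal ha (fun i => by fun_prop)
    (by fun_prop) (.of_forall hlim) one_pos htail, integral_mul_measureReal_le_neg (by fun_prop)⟩

/-- Limit for the negative-exponential part (display (eq:AsyA3)), together with the
identification of the limit as `(1/2)·E[((Z⁺ + Ũ)⁻)²]`. -/
theorem stmt19
    {Ω : Type} [MeasurableSpace Ω] (P : Measure Ω) [IsProbabilityMeasure P]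
    (Y C M G : ℝ) (hY : Y ∈ Set.Ioo (1:ℝ) 2) (hC : 0 < C) (hM : 1 < M) (hG : 0 < G)
    (U V : Ω → ℝ) (hU : Measurable U) (hV : Measurable V)
    (hIndep : IndepFun U V P)
    (hUchar : ∀ u : ℝ, (∫ ω, Complex.exp (Complex.I * u * (U ω)) ∂P) =
      Complex.exp (((C * Real.Gamma (-Y) * |u| ^ Y : ℝ) : ℂ) *
        (((Real.cos (Real.pi * Y / 2) : ℝ) : ℂ)
          - Complex.I * ((Real.sign u : ℝ) : ℂ) * ((Real.sin (Real.pi * Y / 2) : ℝ) : ℂ))))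
    (hVchar : ∀ u : ℝ, (∫ ω, Complex.exp (Complex.I * u * (V ω)) ∂P) =
      Complex.exp (((C * Real.Gamma (-Y) * |u| ^ Y : ℝ) : ℂ) *
        (((Real.cos (Real.pi * Y / 2) : ℝ) : ℂ)
          - Complex.I * ((Real.sign u : ℝ) : ℂ) * ((Real.sin (Real.pi * Y / 2) : ℝ) : ℂ))))
    (Z Ut : Ω → ℝ)
    (hZ : Z = fun ω => U ω - V ω)
    (hUt : Ut = fun ω => (M - 1) * U ω + (G + 1) * V ω)
    (κ : ℝ → ℝ) (e₁ e₂ : ℝ)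
    (hκ : (fun t => κ t - (e₁ * t + e₂ * t ^ (2 - 1/Y))) =o[𝓝[>] (0:ℝ)]
      fun t => t ^ (2 - 1/Y))
    (γ' : ℝ)
    (hγ' : γ' = -C * Real.Gamma (-Y) * ((M-1) ^ Y + (G+1) ^ Y - M ^ Y - G ^ Y))
    (γt : ℝ → ℝ)
    (hγt : ∀ t, γt t = t ^ (1 - 1/Y) * (γ' - κ t / t)) :
    Filter.Tendsto
      (fun t => ∫ v in Set.Ioi (0:ℝ),
        ((Real.exp (t ^ (1/Y) * v) - 1) / t ^ (1/Y)) *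
          (P {ω | max (Z ω + γt t) 0 + Ut ω ≤ -v}).toReal)
      (𝓝[>] (0:ℝ))
      (𝓝 (∫ v in Set.Ioi (0:ℝ), v * (P {ω | max (Z ω) 0 + Ut ω ≤ -v}).toReal)) ∧
    (∫ v in Set.Ioi (0:ℝ), v * (P {ω | max (Z ω) 0 + Ut ω ≤ -v}).toReal)
      = (1/2) * ∫ ω, (max (-(max (Z ω) 0 + Ut ω)) 0) ^ 2 ∂P := by
  have hY0 : 0 < Y := by linarith [hY.1]
  have hinv : 1 / Y < 1 := (div_lt_one hY0).2 hY.1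
  have hY2 : Y ∈ Ioc 0 2 := ⟨hY0, hY.2.le⟩
  subst hZ hUt
  obtain rfl := funext hγt
  exact stmt19_general hY2 hY2 (by linarith) (by linarith) hU hV
    (charFun_map_eq_skewedStableCharFun hU.aemeasurable hY0.ne' hUchar)
    (charFun_map_eq_skewedStableCharFun hV.aemeasurable hY0.ne' hVchar)
    (tendsto_rpow_nhdsGT_zero (one_div_pos.2 hY0))
    (tendsto_rpow_mul_sub_div (sub_pos.2 hinv)
      (isBigO_id_of_sub_isLittleO_rpow (by linarith) hκ) γ')
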